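/- Let π: O(G) → O(H) be a surjective Hopf algebra morphism with O(G) cosemisimple, and suppose A := O(G/H) = O(H\G) is a Hopf subalgebra of O(G). Then A is exactly the direct sum ⊕ C_U of the coefficient coalgebras C_U = U* ⊗ U over those simple right O(G)-comodules U ∈ Ĝ whose restriction to O(H) contains a nonzero invariant vector. -/

import Mathlib

/- Common infrastructure: right comodules over coalgebras, simplicity,
cosemisimplicity, subcoalgebras, adjoint coactions, normality, etc. -/

open TensorProduct

universe u

namespace QG

variable (k : Type u) [Field k]

section Coalg

variable (C : Type u) [AddCommGroup C] [Module k C] [Coalgebra k C]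

/-- `ρ : V →ₗ[k] V ⊗[k] C` is a (coassociative, counital) right coaction. -/
structure IsComod {V : Type u} [AddCommGroup V] [Module k V]
    (ρ : V →ₗ[k] V ⊗[k] C) : Prop where
  coassoc : ∀ v : V, ρ.rTensor C (ρ v) =
    (TensorProduct.assoc k V C C).symm.toLinearMap
      ((Coalgebra.comul (R := k) (A := C)).lTensor V (ρ v))
  counit : ∀ v : V, (TensorProduct.rid k V)
      ((Coalgebra.counit (R := k) (A := C)).lTensor V (ρ v)) = v

/-- A submodule `U ≤ V` is a subcomodule if the coaction restricts to it,
i.e. maps `U` into the image of `U ⊗ C` in `V ⊗ C`. -/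
def IsSubcomod {V : Type u} [AddCommGroup V] [Module k V]
    (ρ : V →ₗ[k] V ⊗[k] C) (U : Submodule k V) : Prop :=
  ∀ u ∈ U, ρ u ∈ LinearMap.range ((U.subtype).rTensor C)

/-- A simple subcomodule: a nonzero subcomodule with no nonzero proper
subcomodules below it. -/
def IsSimpleSubcomod {V : Type u} [AddCommGroup V] [Module k V]
    (ρ : V →ₗ[k] V ⊗[k] C) (U : Submodule k V) : Prop :=
  IsSubcomod k C ρ U ∧ U ≠ ⊥ ∧
    ∀ U' : Submodule k V, U' ≤ U → IsSubcomod k C ρ U' → U' = ⊥ ∨ U' = U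

/-- A comodule is simple if it is simple as a subcomodule of itself. -/
def IsSimpleComod {V : Type u} [AddCommGroup V] [Module k V]
    (ρ : V →ₗ[k] V ⊗[k] C) : Prop :=
  IsSimpleSubcomod k C ρ ⊤

/-- Morphisms of right `C`-comodules. -/
def IsComodHom {V W : Type u} [AddCommGroup V] [Module k V]
    [AddCommGroup W] [Module k W]
    (ρV : V →ₗ[k] V ⊗[k] C) (ρW : W →ₗ[k] W ⊗[k] C) (f : V →ₗ[k] W) : Prop :=
  ρW ∘ₗ f = (f.rTensor C) ∘ₗ ρV

/-- `C` is cosemisimple: every right `C`-comodule is an (internal) direct sum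
of simple subcomodules. -/
def IsCosemisimple : Prop :=
  ∀ (V : Type u) [AddCommGroup V] [Module k V]
    (ρ : V →ₗ[k] V ⊗[k] C), IsComod k C ρ →
    ∃ (ι : Type u) (U : ι → Submodule k V),
      (∀ i, IsSimpleSubcomod k C ρ (U i)) ∧
      iSupIndep U ∧ (⨆ i, U i) = ⊤

/-- Subcoalgebras of `C`, as submodules. -/
def IsSubcoalgebra (D : Submodule k C) : Prop :=
  ∀ x ∈ D, Coalgebra.comul (R := k) x ∈
    LinearMap.range (TensorProduct.map D.subtype D.subtype)

/-- Simple subcoalgebras: nonzero ones with no nonzero proper subcoalgebras. -/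
def IsSimpleSubcoalgebra (D : Submodule k C) : Prop :=
  IsSubcoalgebra k C D ∧ D ≠ ⊥ ∧
    ∀ D' : Submodule k C, D' ≤ D → IsSubcoalgebra k C D' → D' = ⊥ ∨ D' = D

/-- The coefficient space of a comodule: the smallest submodule `D ≤ C` such
that the coaction factors through `V ⊗ D`.  For a simple comodule this is its
coefficient coalgebra. -/
def coeffSpace {V : Type u} [AddCommGroup V] [Module k V]
    (ρ : V →ₗ[k] V ⊗[k] C) : Submodule k C :=
  sInf {D : Submodule k C | ∀ v : V, ρ v ∈ LinearMap.range ((D.subtype).lTensor V)}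

/-- Corestriction of a coaction along a linear map of coalgebras `π : C → D`. -/
noncomputable def cores {D : Type u} [AddCommGroup D] [Module k D]
    {V : Type u} [AddCommGroup V] [Module k V]
    (π : C →ₗ[k] D) (ρ : V →ₗ[k] V ⊗[k] C) : V →ₗ[k] V ⊗[k] D :=
  (π.lTensor V) ∘ₗ ρ

end Coalg

section Bialg

variable (H : Type u) [Ring H] [Bialgebra k H]

/-- An invariant vector for a coaction of a bialgebra. -/
def IsInvariant {V : Type u} [AddCommGroup V] [Module k V]
    (ρ : V →ₗ[k] V ⊗[k] H) (v : V) : Prop :=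
  ρ v = v ⊗ₜ[k] (1 : H)

/-- The tensor product coaction on `V ⊗ W` for a bialgebra `H`:
`v ⊗ w ↦ (v₀ ⊗ w₀) ⊗ v₁w₁`. -/
noncomputable def tensorCoact {V W : Type u}
    [AddCommGroup V] [Module k V] [AddCommGroup W] [Module k W]
    (ρV : V →ₗ[k] V ⊗[k] H) (ρW : W →ₗ[k] W ⊗[k] H) :
    (V ⊗[k] W) →ₗ[k] (V ⊗[k] W) ⊗[k] H :=
  ((LinearMap.mul' k H).lTensor (V ⊗[k] W)) ∘ₗ
    (TensorProduct.tensorTensorTensorComm k V H W H).toLinearMap ∘ₗ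
    (TensorProduct.map ρV ρW)

/-- `O(G/H)`: the right coinvariants `{x | (id ⊗ π)Δ(x) = x ⊗ 1}` of a
quotient map `π`. -/
noncomputable def quotientSpaceLeft {B : Type u} [AddCommGroup B] [Module k B] [One B]
    (π : H →ₗ[k] B) : Submodule k H :=
  LinearMap.ker ((π.lTensor H) ∘ₗ (Coalgebra.comul (R := k) (A := H)) -
    (TensorProduct.mk k H B).flip 1)

/-- `O(H\G)`: the left coinvariants `{x | (π ⊗ id)Δ(x) = 1 ⊗ x}`. -/
noncomputable def quotientSpaceRight {B : Type u} [AddCommGroup B] [Module k B] [One B]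
    (π : H →ₗ[k] B) : Submodule k H :=
  LinearMap.ker ((π.rTensor H) ∘ₗ (Coalgebra.comul (R := k) (A := H)) -
    (TensorProduct.mk k B H) 1)

end Bialg

section Hopf

variable (H : Type u) [Ring H] [HopfAlgebra k H]

/-- Iterated comultiplication `x ↦ x₁ ⊗ (x₂ ⊗ x₃)`. -/
noncomputable def comul2 : H →ₗ[k] H ⊗[k] (H ⊗[k] H) :=
  ((Coalgebra.comul (R := k) (A := H)).lTensor H) ∘ₗ (Coalgebra.comul (R := k) (A := H))

/-- The right adjoint coaction `x ↦ x₂ ⊗ S(x₁)x₃`. -/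
noncomputable def adR : H →ₗ[k] H ⊗[k] H :=
  ((LinearMap.mul' k H).lTensor H) ∘ₗ
    (TensorProduct.assoc k H H H).toLinearMap ∘ₗ
    (((TensorProduct.comm k H H).toLinearMap).rTensor H) ∘ₗ
    (TensorProduct.assoc k H H H).symm.toLinearMap ∘ₗ
    ((HopfAlgebra.antipode (R := k) (A := H)).rTensor (H ⊗[k] H)) ∘ₗ
    comul2 k H

/-- The left adjoint coaction `x ↦ x₁S(x₃) ⊗ x₂` (a left coaction, with the
coacting tensorand on the left). -/
noncomputable def adL : H →ₗ[k] H ⊗[k] H :=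
  ((LinearMap.mul' k H).rTensor H) ∘ₗ
    (TensorProduct.assoc k H H H).symm.toLinearMap ∘ₗ
    (((TensorProduct.comm k H H).toLinearMap).lTensor H) ∘ₗ
    (((HopfAlgebra.antipode (R := k) (A := H)).lTensor H).lTensor H) ∘ₗ
    comul2 k H

variable {B : Type u} [AddCommGroup B] [Module k B]

/-- `π : O(G) → O(H)` is right-normal: it is a morphism of right
`O(G)`-comodules for the right adjoint coaction, i.e. the right adjoint
coaction descends along `π`. -/
def IsRightNormal (π : H →ₗ[k] B) : Prop :=
  ∃ ρ : B →ₗ[k] B ⊗[k] H, ρ ∘ₗ π = (π.rTensor H) ∘ₗ adR k H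

/-- `π : O(G) → O(H)` is left-normal: the left adjoint coaction descends
along `π`. -/
def IsLeftNormal (π : H →ₗ[k] B) : Prop :=
  ∃ lam : B →ₗ[k] H ⊗[k] B, lam ∘ₗ π = (π.lTensor H) ∘ₗ adL k H

end Hopf

end QG

namespace QG

variable (k : Type u) [Field k]

section Coalg2

variable (C : Type u) [AddCommGroup C] [Module k C] [Coalgebra k C]

/-- A bundled simple right `C`-comodule. -/
structure SimpleComodule where
  V : Type u
  [addCommGroup : AddCommGroup V]
  [module : Module k V]
  ρ : V →ₗ[k] V ⊗[k] C
  isComod : IsComod k C ρ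
  isSimple : IsSimpleComod k C ρ

attribute [instance] SimpleComodule.addCommGroup SimpleComodule.module

/-- A simple comodule `(T, ρT)` is a constituent of a comodule `(V, ρV)`
(over a cosemisimple coalgebra) iff there is a nonzero comodule map `T → V`. -/
def IsConstituent {T V : Type u} [AddCommGroup T] [Module k T]
    [AddCommGroup V] [Module k V]
    (ρT : T →ₗ[k] T ⊗[k] C) (ρV : V →ₗ[k] V ⊗[k] C) : Prop :=
  ∃ f : T →ₗ[k] V, f ≠ 0 ∧ IsComodHom k C ρT ρV f

/-- Isomorphism of (simple) comodules. -/
def comodIsoRel (X Y : SimpleComodule k C) : Prop :=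
  ∃ e : X.V ≃ₗ[k] Y.V, IsComodHom k C X.ρ Y.ρ e.toLinearMap

/-- The set `Ĉ` of isomorphism classes of simple right `C`-comodules. -/
def SimpleComodQuot := Quot (comodIsoRel k C)

/-- The isomorphism class of a simple comodule. -/
def SimpleComodule.cls (X : SimpleComodule k C) : SimpleComodQuot k C :=
  Quot.mk _ X

/-- Group-like elements of a coalgebra; these correspond to the
one-dimensional comodules, i.e. to characters. -/
def IsGroupLike (a : C) : Prop :=
  Coalgebra.counit (R := k) (A := C) a = (1 : k) ∧
    Coalgebra.comul (R := k) (A := C) a = a ⊗ₜ[k] a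

/-- A linear map `φ : C → Z` out of a coalgebra is central if
`φ(x₁) ⊗ x₂ = φ(x₂) ⊗ x₁`. -/
def IsCentralMap {Z : Type u} [AddCommGroup Z] [Module k Z] (φ : C →ₗ[k] Z) : Prop :=
  (φ.rTensor C) ∘ₗ (Coalgebra.comul (R := k) (A := C)) =
    (φ.rTensor C) ∘ₗ (TensorProduct.comm k C C).toLinearMap ∘ₗ
      (Coalgebra.comul (R := k) (A := C))

/-- The simple comodule `X` has "central character" `g` with respect to the
quotient map `γ : C → Z`: corestricted along `γ`, the coaction on `X` is a sum
of copies of the character `g`. -/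
def HasCentralChar {Z : Type u} [AddCommGroup Z] [Module k Z]
    (γ : C →ₗ[k] Z) (X : SimpleComodule k C) (g : Z) : Prop :=
  ∀ v : X.V, cores k C γ X.ρ v = v ⊗ₜ[k] g

end Coalg2

/-- The k-span of the set of products `g * a`, `a ∈ Am`; for `Am` a submodule
this is the left ideal generated by `Am`. -/
def leftIdealGen {G : Type u} [Ring G] [Module k G] (Am : Submodule k G) :
    Submodule k G :=
  Submodule.span k {x : G | ∃ g : G, ∃ a ∈ Am, x = g * a}

end QG

namespace QG

/-- A Hopf subalgebra, as a submodule: a subalgebra which is a subcoalgebra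
and is invariant under the antipode. -/
def IsHopfSubalgebra (k : Type u) [Field k] (G : Type u) [Ring G] [HopfAlgebra k G]
    (D : Submodule k G) : Prop :=
  (1 : G) ∈ D ∧ (∀ x ∈ D, ∀ y ∈ D, x * y ∈ D) ∧ IsSubcoalgebra k G D ∧
    D.map (HopfAlgebra.antipode (R := k) (A := G)) ≤ D

end QG

/-!
Over a cosemisimple coalgebra `C`, a right coideal `A` is a sum of simple subcomodules, and each of
them lies in its own coefficient space, because a comodule map `e : V → C` is the matrix
coefficient of the functional `ε ∘ e`. If `A` is the space of coinvariants, these simple comodules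
embed in `A` and so consist of coinvariant vectors. Conversely, a comodule map sends coinvariant
vectors to `A`, so a simple comodule `U` with a nonzero coinvariant vector is mapped into `A` by
every comodule map `U → C`; the images of these maps span the coefficient space `C_U`. Finally,
`C_U` is the `U`-isotypic component of `C` as a module over the dual algebra of `C`, and isotypic
components are independent.
-/

namespace QG

section Slice

variable {k V W C D : Type*} [CommSemiring k] [AddCommMonoid V] [Module k V]
  [AddCommMonoid W] [Module k W] [AddCommMonoid C] [Module k C] [AddCommMonoid D] [Module k D]

/-- The slice map `v ⊗ c ↦ f(c) v` of a linear functional `f` on the right tensor factor. -/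
noncomputable def sliceRight (f : C →ₗ[k] k) : V ⊗[k] C →ₗ[k] V :=
  (TensorProduct.rid k V).toLinearMap ∘ₗ f.lTensor V

/-- The slice map `v ⊗ c ↦ g(v) c` of a linear functional `g` on the left tensor factor. -/
noncomputable def sliceLeft (g : V →ₗ[k] k) : V ⊗[k] C →ₗ[k] C :=
  (TensorProduct.lid k C).toLinearMap ∘ₗ g.rTensor C

@[simp]
lemma sliceRight_tmul (f : C →ₗ[k] k) (v : V) (c : C) : sliceRight f (v ⊗ₜ[k] c) = f c • v := by
  simp [sliceRight]

@[simp]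
lemma sliceLeft_tmul (g : V →ₗ[k] k) (v : V) (c : C) : sliceLeft g (v ⊗ₜ[k] c) = g v • c := by
  simp [sliceLeft]

lemma lTensor_rTensor_comm (f : V →ₗ[k] W) (g : C →ₗ[k] D) (t : V ⊗[k] C) :
    g.lTensor W (f.rTensor C t) = f.rTensor D (g.lTensor V t) := by
  rw [← LinearMap.comp_apply, ← LinearMap.comp_apply, LinearMap.lTensor_comp_rTensor,
    LinearMap.rTensor_comp_lTensor]

lemma sliceRight_rTensor (h : V →ₗ[k] W) (f : C →ₗ[k] k) (t : V ⊗[k] C) :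
    sliceRight f (h.rTensor C t) = h (sliceRight f t) := by
  induction t with
  | zero => simp
  | tmul v c => simp
  | add s t hs ht => simp only [map_add, hs, ht]

lemma sliceLeft_lTensor (h : C →ₗ[k] D) (g : V →ₗ[k] k) (t : V ⊗[k] C) :
    sliceLeft g (h.lTensor V t) = h (sliceLeft g t) := by
  induction t with
  | zero => simp
  | tmul v c => simp
  | add s t hs ht => simp only [map_add, hs, ht]

lemma sliceLeft_rTensor (h : V →ₗ[k] W) (g : W →ₗ[k] k) (t : V ⊗[k] C) :
    sliceLeft g (h.rTensor C t) = sliceLeft (g ∘ₗ h) t := by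
  simp only [sliceLeft, LinearMap.rTensor_comp, LinearMap.comp_apply]

lemma ext_sliceRight [Module.Free k C] {s t : V ⊗[k] C}
    (h : ∀ f : C →ₗ[k] k, sliceRight f s = sliceRight f t) : s = t := by
  classical
  let b := Module.Free.chooseBasis k C
  refine (TensorProduct.equivFinsuppOfBasisRight (M := V) b).injective (Finsupp.ext fun i ↦ ?_)
  rw [TensorProduct.equivFinsuppOfBasisRight_apply, TensorProduct.equivFinsuppOfBasisRight_apply]
  exact h (b.coord i)

lemma ext_sliceLeft [Module.Free k V] {s t : V ⊗[k] C}
    (h : ∀ g : V →ₗ[k] k, sliceLeft g s = sliceLeft g t) : s = t := by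
  classical
  let b := Module.Free.chooseBasis k V
  refine (TensorProduct.equivFinsuppOfBasisLeft (N := C) b).injective (Finsupp.ext fun i ↦ ?_)
  rw [TensorProduct.equivFinsuppOfBasisLeft_apply, TensorProduct.equivFinsuppOfBasisLeft_apply]
  exact h (b.coord i)

end Slice

section SliceRange

variable {k V C : Type*} [CommRing k] [AddCommGroup V] [Module k V] [AddCommGroup C] [Module k C]

lemma mem_range_rTensor_subtype_iff [Module.Free k C] {U : Submodule k V} {t : V ⊗[k] C} :
    t ∈ LinearMap.range (U.subtype.rTensor C) ↔ ∀ f : C →ₗ[k] k, sliceRight f t ∈ U := by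
  constructor
  · rintro ⟨s, rfl⟩ f
    rw [sliceRight_rTensor]
    exact (sliceRight f s).2
  · intro h
    have exact_mkQ := rTensor_exact C (LinearMap.exact_subtype_mkQ U) U.mkQ_surjective
    refine (exact_mkQ t).1 (ext_sliceRight fun f ↦ ?_)
    rw [sliceRight_rTensor, map_zero]
    exact (Submodule.Quotient.mk_eq_zero U).2 (h f)

lemma mem_range_lTensor_subtype_iff [Module.Free k V] {U : Submodule k C} {t : V ⊗[k] C} :
    t ∈ LinearMap.range (U.subtype.lTensor V) ↔ ∀ g : V →ₗ[k] k, sliceLeft g t ∈ U := by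
  constructor
  · rintro ⟨s, rfl⟩ g
    rw [sliceLeft_lTensor]
    exact (sliceLeft g s).2
  · intro h
    have exact_mkQ := lTensor_exact V (LinearMap.exact_subtype_mkQ U) U.mkQ_surjective
    refine (exact_mkQ t).1 (ext_sliceLeft fun g ↦ ?_)
    rw [sliceLeft_lTensor, map_zero]
    exact (Submodule.Quotient.mk_eq_zero U).2 (h g)

end SliceRange

section Isotypic

lemma sSupIndep_image {α β : Type*} [CompleteLattice α] [CompleteLattice β]
    (φ : CompleteLatticeHom α β) {s : Set α} (hs : sSupIndep s) : sSupIndep (φ '' s) := by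
  rintro _ ⟨a, ha, rfl⟩
  have disj : Disjoint (φ a) (φ (sSup (s \ {a}))) := (hs ha).map φ
  refine disj.mono_right ?_
  rw [map_sSup]
  refine sSup_le_sSup ?_
  rintro _ ⟨⟨c, hc, rfl⟩, hne⟩
  exact ⟨c, ⟨hc, fun hca ↦ hne (congrArg φ hca)⟩, rfl⟩

variable {R M S : Type*} [Ring R] [AddCommGroup M] [Module R M] [AddCommGroup S] [Module R S]
  [IsSimpleModule R S]

lemma isotypicComponent_eq_iSup_range :
    isotypicComponent R M S = ⨆ f : S →ₗ[R] M, LinearMap.range f := by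
  apply le_antisymm
  · refine sSup_le fun m ⟨e⟩ ↦ ?_
    have range_eq : LinearMap.range (m.subtype ∘ₗ e.symm.toLinearMap) = m := by
      rw [LinearEquiv.range_comp, m.range_subtype]
    rw [← range_eq]
    exact le_iSup (fun f : S →ₗ[R] M ↦ LinearMap.range f) _
  · refine iSup_le fun f ↦ ?_
    obtain inj | rfl := f.injective_or_eq_zero
    · exact le_sSup ⟨(LinearEquiv.ofInjective f inj).symm⟩
    · rw [LinearMap.range_zero]
      exact bot_le

lemma isotypicComponent_mem_isotypicComponents {f : S →ₗ[R] M} (hf : f ≠ 0) :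
    isotypicComponent R M S ∈ isotypicComponents R M := by
  let e := LinearEquiv.ofInjective f (f.injective_of_ne_zero hf)
  exact ⟨LinearMap.range f, .congr e.symm, e.isotypicComponent_eq⟩

end Isotypic

variable {k : Type u} [Field k]

section Coaction

variable {C V W X : Type u} [AddCommGroup C] [Module k C]
  [AddCommGroup V] [Module k V] [AddCommGroup W] [Module k W] [AddCommGroup X] [Module k X]
  {ρ : V →ₗ[k] V ⊗[k] C} {σ : W →ₗ[k] W ⊗[k] C} {τ : X →ₗ[k] X ⊗[k] C}

lemma isSubcomod_iff {U : Submodule k V} :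
    IsSubcomod k C ρ U ↔ ∀ u ∈ U, ∀ f : C →ₗ[k] k, sliceRight f (ρ u) ∈ U := by
  simp only [IsSubcomod, mem_range_rTensor_subtype_iff]

lemma isSubcomod_top : IsSubcomod k C ρ ⊤ :=
  isSubcomod_iff.2 fun _ _ _ ↦ Submodule.mem_top

lemma isComodHom_iff {f : V →ₗ[k] W} :
    IsComodHom k C ρ σ f ↔
      ∀ (φ : C →ₗ[k] k) (v : V), f (sliceRight φ (ρ v)) = sliceRight φ (σ (f v)) := by
  simp only [← sliceRight_rTensor]
  exact ⟨fun h φ v ↦ congrArg (sliceRight φ) (LinearMap.congr_fun h v).symm,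
    fun h ↦ LinearMap.ext fun v ↦ ext_sliceRight fun φ ↦ (h φ v).symm⟩

lemma IsComodHom.comp {f : V →ₗ[k] W} {g : W →ₗ[k] X} (hg : IsComodHom k C σ τ g)
    (hf : IsComodHom k C ρ σ f) : IsComodHom k C ρ τ (g ∘ₗ f) := by
  rw [isComodHom_iff] at *
  simp [hf, hg]

lemma IsSubcomod.map {f : V →ₗ[k] W} {U : Submodule k V} (hU : IsSubcomod k C ρ U)
    (hf : IsComodHom k C ρ σ f) : IsSubcomod k C σ (U.map f) := by
  rw [isSubcomod_iff] at hU ⊢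
  rintro _ ⟨u, hu, rfl⟩ φ
  exact ⟨_, hU u hu φ, isComodHom_iff.1 hf φ u⟩

lemma IsSubcomod.comap {f : V →ₗ[k] W} {U : Submodule k W} (hU : IsSubcomod k C σ U)
    (hf : IsComodHom k C ρ σ f) : IsSubcomod k C ρ (U.comap f) := by
  rw [isSubcomod_iff] at hU ⊢
  intro v hv φ
  rw [Submodule.mem_comap, isComodHom_iff.1 hf]
  exact hU (f v) hv φ

/-- The coaction on a subcomodule `U`, the restriction of the coaction on the ambient space. -/
noncomputable def IsSubcomod.coaction {U : Submodule k V} (hU : IsSubcomod k C ρ U) :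
    U →ₗ[k] U ⊗[k] C :=
  (LinearEquiv.ofInjective (U.subtype.rTensor C)
    (Module.Flat.rTensor_preserves_injective_linearMap _ U.subtype_injective)).symm.toLinearMap ∘ₗ
    (ρ ∘ₗ U.subtype).codRestrict _ fun u ↦ hU u u.2

lemma IsSubcomod.isComodHom_subtype {U : Submodule k V} (hU : IsSubcomod k C ρ U) :
    IsComodHom k C hU.coaction ρ U.subtype :=
  LinearMap.ext fun u ↦ (congrArg Subtype.val
    (LinearEquiv.apply_symm_apply (LinearEquiv.ofInjective (U.subtype.rTensor C)
      (Module.Flat.rTensor_preserves_injective_linearMap _ U.subtype_injective))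
      ⟨ρ u, hU u u.2⟩)).symm

lemma IsSimpleSubcomod.isSimpleComod_coaction {U : Submodule k V}
    (hU : IsSimpleSubcomod k C ρ U) : IsSimpleComod k C hU.1.coaction := by
  have map_subtype_inj : Function.Injective (Submodule.map U.subtype) :=
    Submodule.map_injective_of_injective U.subtype_injective
  refine ⟨isSubcomod_top, fun htop ↦ hU.2.1 ?_, fun U' _ hU' ↦ ?_⟩
  · rw [← U.map_subtype_top, htop, Submodule.map_bot]
  · refine (hU.2.2 _ (Submodule.map_subtype_le U U') (hU'.map hU.1.isComodHom_subtype)).imp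
      (fun h ↦ map_subtype_inj ?_) fun h ↦ map_subtype_inj ?_
    · rw [h, Submodule.map_bot]
    · rw [h, Submodule.map_subtype_top]

lemma IsSimpleComod.exists_ne_zero (hρ : IsSimpleComod k C ρ) : ∃ v : V, v ≠ 0 :=
  let ⟨v, _, hv⟩ := (Submodule.ne_bot_iff _).1 hρ.2.1
  ⟨v, hv⟩

lemma IsSimpleComod.range_le_of_apply_mem (hρ : IsSimpleComod k C ρ) {f : V →ₗ[k] W}
    (hf : IsComodHom k C ρ σ f) {A : Submodule k W} (hA : IsSubcomod k C σ A)
    {v : V} (hv : v ≠ 0) (hfv : f v ∈ A) : LinearMap.range f ≤ A := by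
  have comap_ne_bot : A.comap f ≠ ⊥ := (Submodule.ne_bot_iff _).2 ⟨v, hfv, hv⟩
  have comap_eq_top : A.comap f = ⊤ :=
    (hρ.2.2 _ le_top (hA.comap hf)).resolve_left comap_ne_bot
  rw [LinearMap.range_eq_map, Submodule.map_le_iff_le_comap, comap_eq_top]

end Coaction

section Coinvariants

variable {B C V W : Type u} [AddCommGroup B] [Module k B] [AddCommGroup C] [Module k C]
  [AddCommGroup V] [Module k V] [AddCommGroup W] [Module k W]
  {ρ : V →ₗ[k] V ⊗[k] C} {σ : W →ₗ[k] W ⊗[k] C}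

/-- The vectors `v` with `(id ⊗ π)(ρ v) = v ⊗ b`. For a bialgebra map `π` and `b = 1` these are the
invariant vectors of the corestriction of `ρ` along `π`. -/
noncomputable def coinvariants (π : C →ₗ[k] B) (b : B) (ρ : V →ₗ[k] V ⊗[k] C) : Submodule k V :=
  LinearMap.eqLocus (cores k C π ρ) ((TensorProduct.mk k V B).flip b)

lemma quotientSpaceLeft_eq_coinvariants {G : Type u} [Ring G] [Bialgebra k G] [One B]
    (π : G →ₗ[k] B) :
    quotientSpaceLeft k G π = coinvariants π 1 (Coalgebra.comul (R := k) (A := G)) :=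
  (LinearMap.eqLocus_eq_ker_sub _ _).symm

lemma IsComodHom.cores_apply {f : V →ₗ[k] W} (hf : IsComodHom k C ρ σ f) (π : C →ₗ[k] B) (v : V) :
    cores k C π σ (f v) = f.rTensor B (cores k C π ρ v) := by
  have hfv : σ (f v) = f.rTensor C (ρ v) := LinearMap.congr_fun hf v
  simp only [cores, LinearMap.comp_apply, hfv, lTensor_rTensor_comm]

lemma IsComodHom.map_mem_coinvariants {f : V →ₗ[k] W} (hf : IsComodHom k C ρ σ f)
    {π : C →ₗ[k] B} {b : B} {v : V} (hv : v ∈ coinvariants π b ρ) :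
    f v ∈ coinvariants π b σ := by
  have hρv : cores k C π ρ v = v ⊗ₜ b := hv
  change cores k C π σ (f v) = f v ⊗ₜ b
  rw [hf.cores_apply, hρv, LinearMap.rTensor_tmul]

lemma IsComodHom.mem_coinvariants_of_map_mem {f : V →ₗ[k] W} (hf : IsComodHom k C ρ σ f)
    (inj : Function.Injective f) {π : C →ₗ[k] B} {b : B} {v : V}
    (hv : f v ∈ coinvariants π b σ) : v ∈ coinvariants π b ρ := by
  have hσv : cores k C π σ (f v) = f v ⊗ₜ b := hv
  apply Module.Flat.rTensor_preserves_injective_linearMap (M := B) f inj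
  rw [← hf.cores_apply, hσv, LinearMap.flip_apply, TensorProduct.mk_apply, LinearMap.rTensor_tmul]

end Coinvariants

section Comodule

variable {C V W : Type u} [AddCommGroup C] [Module k C] [Coalgebra k C]
  [AddCommGroup V] [Module k V] [AddCommGroup W] [Module k W]
  {ρ : V →ₗ[k] V ⊗[k] C} {σ : W →ₗ[k] W ⊗[k] C}

lemma isComod_comul : IsComod k C (Coalgebra.comul (R := k) (A := C)) where
  coassoc x := by
    rw [← Coalgebra.coassoc_apply]
    exact ((TensorProduct.assoc k C C C).symm_apply_apply _).symm
  counit x := by simp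

lemma IsSubcoalgebra.isSubcomod {D : Submodule k C} (hD : IsSubcoalgebra k C D) :
    IsSubcomod k C (Coalgebra.comul (R := k) (A := C)) D := by
  intro x hx
  obtain ⟨t, ht⟩ := hD x hx
  refine ⟨D.subtype.lTensor D t, ?_⟩
  rw [← ht, ← LinearMap.comp_apply, LinearMap.rTensor_comp_lTensor]

lemma IsComod.of_injective {f : V →ₗ[k] W} (hf : IsComodHom k C ρ σ f)
    (inj : Function.Injective f) (hσ : IsComod k C σ) : IsComod k C ρ where
  coassoc v := by
    have inj₂ : Function.Injective ((f.rTensor C).rTensor C) :=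
      Module.Flat.rTensor_preserves_injective_linearMap _
        (Module.Flat.rTensor_preserves_injective_linearMap f inj)
    have hfv : σ (f v) = f.rTensor C (ρ v) := LinearMap.congr_fun hf v
    have assoc_natural (t : V ⊗[k] (C ⊗[k] C)) :
        (TensorProduct.assoc k W C C).symm (f.rTensor (C ⊗[k] C) t) =
          (f.rTensor C).rTensor C ((TensorProduct.assoc k V C C).symm t) := by
      rw [LinearMap.rTensor_tensor]
      simp
    apply inj₂
    calc (f.rTensor C).rTensor C (ρ.rTensor C (ρ v))
        = σ.rTensor C (f.rTensor C (ρ v)) := by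
          rw [← LinearMap.rTensor_comp_apply, ← LinearMap.rTensor_comp_apply, ← hf]
      _ = (TensorProduct.assoc k W C C).symm
            ((Coalgebra.comul (R := k) (A := C)).lTensor W (f.rTensor C (ρ v))) := by
          rw [← hfv]
          exact hσ.coassoc (f v)
      _ = (TensorProduct.assoc k W C C).symm
            (f.rTensor (C ⊗[k] C) ((Coalgebra.comul (R := k) (A := C)).lTensor V (ρ v))) := by
          rw [lTensor_rTensor_comm]
      _ = _ := assoc_natural _
  counit v := by
    apply inj
    have counit_slice := isComodHom_iff.1 hf (Coalgebra.counit (R := k) (A := C)) v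
    exact counit_slice.trans (hσ.counit (f v))

lemma IsSubcomod.isComod_coaction {U : Submodule k V} (hU : IsSubcomod k C ρ U)
    (hρ : IsComod k C ρ) : IsComod k C hU.coaction :=
  hρ.of_injective hU.isComodHom_subtype U.subtype_injective

/-- A simple subcomodule of a comodule, bundled as a simple comodule. -/
noncomputable def IsSimpleSubcomod.toSimpleComodule {U : Submodule k V}
    (hU : IsSimpleSubcomod k C ρ U) (hρ : IsComod k C ρ) : SimpleComodule k C where
  V := U
  ρ := hU.1.coaction
  isComod := hU.1.isComod_coaction hρ
  isSimple := hU.isSimpleComod_coaction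

lemma IsCosemisimple.eq_top_of_forall_range_le (hC : IsCosemisimple k C) (hρ : IsComod k C ρ)
    {N : Submodule k V}
    (hN : ∀ (X : SimpleComodule k C) (f : X.V →ₗ[k] V), IsComodHom k C X.ρ ρ f →
      Function.Injective f → LinearMap.range f ≤ N) : N = ⊤ := by
  obtain ⟨ι, U, hU, -, iSup_eq_top⟩ := hC V ρ hρ
  rw [eq_top_iff, ← iSup_eq_top, iSup_le_iff]
  intro i
  rw [← (U i).range_subtype]
  exact hN ((hU i).toSimpleComodule hρ) _ (hU i).1.isComodHom_subtype (U i).subtype_injective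

end Comodule

section MatrixCoeff

variable {C V : Type u} [AddCommGroup C] [Module k C] [AddCommGroup V] [Module k V]
  {ρ : V →ₗ[k] V ⊗[k] C}

/-- The matrix coefficients `v ↦ g(v₀) v₁` of a coaction against a linear functional `g`. -/
noncomputable def matrixCoeff (ρ : V →ₗ[k] V ⊗[k] C) (g : V →ₗ[k] k) : V →ₗ[k] C :=
  sliceLeft g ∘ₗ ρ

lemma coeffSpace_eq_iSup_range_matrixCoeff :
    coeffSpace k C ρ = ⨆ g : V →ₗ[k] k, LinearMap.range (matrixCoeff ρ g) := by
  apply le_antisymm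
  · exact sInf_le fun v ↦ mem_range_lTensor_subtype_iff.2 fun g ↦
      Submodule.mem_iSup_of_mem g ⟨v, rfl⟩
  · refine iSup_le fun g ↦ le_sInf fun D hD ↦ ?_
    rintro _ ⟨v, rfl⟩
    exact mem_range_lTensor_subtype_iff.1 (hD v) g

variable [Coalgebra k C]

lemma comul_sliceLeft (g : V →ₗ[k] k) (t : V ⊗[k] C) :
    Coalgebra.comul (R := k) (sliceLeft g t) =
      (sliceLeft g).rTensor C ((TensorProduct.assoc k V C C).symm
        ((Coalgebra.comul (R := k) (A := C)).lTensor V t)) := by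
  have slice_assoc (s : V ⊗[k] (C ⊗[k] C)) :
      (sliceLeft g).rTensor C ((TensorProduct.assoc k V C C).symm s) = sliceLeft g s := by
    refine LinearMap.congr_fun (f := (sliceLeft g).rTensor C ∘ₗ
      (TensorProduct.assoc k V C C).symm.toLinearMap) (TensorProduct.ext_threefold' ?_) s
    simp [TensorProduct.smul_tmul']
  rw [slice_assoc, sliceLeft_lTensor]

lemma IsComod.isComodHom_matrixCoeff (hρ : IsComod k C ρ) (g : V →ₗ[k] k) :
    IsComodHom k C ρ Coalgebra.comul (matrixCoeff ρ g) := by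
  ext v
  simp only [matrixCoeff, LinearMap.rTensor_comp, LinearMap.comp_apply, comul_sliceLeft,
    hρ.coassoc, LinearEquiv.coe_coe]

lemma IsComodHom.eq_matrixCoeff {e : V →ₗ[k] C} (he : IsComodHom k C ρ Coalgebra.comul e) :
    e = matrixCoeff ρ (Coalgebra.counit ∘ₗ e) := by
  ext v
  have hev : Coalgebra.comul (R := k) (e v) = e.rTensor C (ρ v) := LinearMap.congr_fun he v
  rw [matrixCoeff, LinearMap.comp_apply, ← sliceLeft_rTensor, ← hev]
  simp [sliceLeft]

lemma IsComod.coeffSpace_le_iff (hρ : IsComod k C ρ) {D : Submodule k C} :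
    coeffSpace k C ρ ≤ D ↔
      ∀ e : V →ₗ[k] C, IsComodHom k C ρ Coalgebra.comul e → LinearMap.range e ≤ D := by
  rw [coeffSpace_eq_iSup_range_matrixCoeff, iSup_le_iff]
  exact ⟨fun h e he ↦ he.eq_matrixCoeff ▸ h _, fun h g ↦ h _ (hρ.isComodHom_matrixCoeff g)⟩

lemma IsComodHom.range_le_coeffSpace (hρ : IsComod k C ρ) {e : V →ₗ[k] C}
    (he : IsComodHom k C ρ Coalgebra.comul e) : LinearMap.range e ≤ coeffSpace k C ρ :=
  hρ.coeffSpace_le_iff.1 le_rfl e he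

lemma IsComod.counit_matrixCoeff (hρ : IsComod k C ρ) (g : V →ₗ[k] k) (v : V) :
    Coalgebra.counit (R := k) (matrixCoeff ρ g v) = g v := by
  have counit_sliceLeft (t : V ⊗[k] C) : Coalgebra.counit (R := k) (sliceLeft g t) =
      g (sliceRight (Coalgebra.counit (R := k)) t) := by
    induction t with
    | zero => simp
    | tmul v c => simp [mul_comm]
    | add s t hs ht => simp only [map_add, hs, ht]
  exact (counit_sliceLeft (ρ v)).trans (congrArg g (hρ.counit v))

lemma IsComod.exists_isComodHom_apply_ne_zero (hρ : IsComod k C ρ) {v : V} (hv : v ≠ 0) :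
    ∃ e : V →ₗ[k] C, IsComodHom k C ρ Coalgebra.comul e ∧ e v ≠ 0 := by
  obtain ⟨g, hg⟩ := Module.Projective.exists_dual_ne_zero k hv
  refine ⟨matrixCoeff ρ g, hρ.isComodHom_matrixCoeff g, fun h ↦ hg ?_⟩
  rw [← hρ.counit_matrixCoeff g v, h, map_zero]

end MatrixCoeff

section DualAlgebra

variable {C V W : Type u} [AddCommGroup C] [Module k C] [Coalgebra k C]
  [AddCommGroup V] [Module k V] [AddCommGroup W] [Module k W]
  {ρ : V →ₗ[k] V ⊗[k] C} {σ : W →ₗ[k] W ⊗[k] C}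

lemma sliceRight_convMul (φ ψ : WithConv (C →ₗ[k] k)) (t : V ⊗[k] C) :
    sliceRight (φ * ψ).ofConv t =
      sliceRight φ.ofConv (sliceRight ψ.ofConv ((TensorProduct.assoc k V C C).symm
        ((Coalgebra.comul (R := k) (A := C)).lTensor V t))) := by
  induction t with
  | zero => simp
  | add s t hs ht => simp only [map_add, hs, ht]
  | tmul v c =>
    simp only [sliceRight_tmul, LinearMap.lTensor_tmul, LinearMap.convMul_apply]
    induction Coalgebra.comul (R := k) c with
    | zero => simp
    | add s t hs ht => simp only [map_add, TensorProduct.tmul_add, add_smul, hs, ht]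
    | tmul c d =>
      simp only [TensorProduct.map_tmul, LinearMap.mul'_apply, TensorProduct.assoc_symm_tmul,
        sliceRight_tmul, map_smul]
      rw [mul_comm, mul_smul]

/-- The action `φ • v = φ(v₁) v₀` on a right comodule of the dual algebra of the coalgebra, which is
the space of linear functionals under convolution. -/
noncomputable def IsComod.dualAction (hρ : IsComod k C ρ) :
    WithConv (C →ₗ[k] k) →ₐ[k] Module.End k V :=
  AlgHom.ofLinearMap
    { toFun φ := sliceRight φ.ofConv ∘ₗ ρ
      map_add' φ ψ := by
        ext v
        simp [sliceRight, LinearMap.lTensor_add]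
      map_smul' a φ := by
        ext v
        simp [sliceRight, LinearMap.lTensor_smul] }
    (LinearMap.ext hρ.counit)
    fun φ ψ ↦ by
      ext v
      have coassoc_v := hρ.coassoc v
      simp only [LinearEquiv.coe_coe] at coassoc_v
      simp [sliceRight_convMul, ← coassoc_v, sliceRight_rTensor]

/-- The space of a right comodule, regarded as a left module over the dual algebra of the coalgebra.
It is a type synonym because the module structure depends on the coaction. -/
def IsComod.DualModule {V : Type u} [AddCommGroup V] [Module k V] {ρ : V →ₗ[k] V ⊗[k] C}
    (_ : IsComod k C ρ) : Type u := V

namespace IsComod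

variable (hρ : IsComod k C ρ) (hσ : IsComod k C σ)

instance : AddCommGroup hρ.DualModule := inferInstanceAs (AddCommGroup V)

instance : Module k hρ.DualModule := inferInstanceAs (Module k V)

noncomputable instance : Module (WithConv (C →ₗ[k] k)) hρ.DualModule :=
  Module.compHom V hρ.dualAction.toRingHom

instance : IsScalarTower k (WithConv (C →ₗ[k] k)) hρ.DualModule where
  smul_assoc a φ v := LinearMap.congr_fun (map_smul hρ.dualAction a φ) v

lemma isSubcomod_restrictScalars (N : Submodule (WithConv (C →ₗ[k] k)) hρ.DualModule) :
    IsSubcomod k C ρ (N.restrictScalars k) :=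
  isSubcomod_iff.2 fun _ hv φ ↦ N.smul_mem (.toConv φ) hv

lemma isSimpleModule_dualModule (hs : IsSimpleComod k C ρ) :
    IsSimpleModule (WithConv (C →ₗ[k] k)) hρ.DualModule := by
  obtain ⟨v, hv⟩ := hs.exists_ne_zero
  have : Nontrivial hρ.DualModule := ⟨v, 0, hv⟩
  refine isSimpleModule_iff _ _ |>.2 ⟨fun N ↦ ?_⟩
  refine (hs.2.2 _ le_top (hρ.isSubcomod_restrictScalars N)).imp (fun h ↦ ?_) fun h ↦ ?_
  · exact (Submodule.restrictScalars_eq_bot_iff k _ _).1 h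
  · exact (Submodule.restrictScalars_eq_top_iff k _ _).1 h

/-- A comodule morphism, regarded as a linear map over the dual algebra. -/
def dualModuleHom {f : V →ₗ[k] W} (hf : IsComodHom k C ρ σ f) :
    hρ.DualModule →ₗ[WithConv (C →ₗ[k] k)] hσ.DualModule where
  toFun := f
  map_add' := f.map_add
  map_smul' φ v := isComodHom_iff.1 hf φ.ofConv v

lemma isComodHom_restrictScalars
    (f : hρ.DualModule →ₗ[WithConv (C →ₗ[k] k)] hσ.DualModule) :
    IsComodHom k C ρ σ (f.restrictScalars k) :=
  isComodHom_iff.2 fun φ v ↦ f.map_smul (.toConv φ) v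

end IsComod

end DualAlgebra

section CoeffSpace

variable {C V : Type u} [AddCommGroup C] [Module k C] [Coalgebra k C]
  [AddCommGroup V] [Module k V] {ρ : V →ₗ[k] V ⊗[k] C}

lemma IsComod.coeffSpace_eq_restrictScalars_isotypicComponent (hρ : IsComod k C ρ)
    (hs : IsSimpleComod k C ρ) :
    coeffSpace k C ρ = (isotypicComponent (WithConv (C →ₗ[k] k))
      (isComod_comul (k := k) (C := C)).DualModule hρ.DualModule).restrictScalars k := by
  have := hρ.isSimpleModule_dualModule hs
  rw [isotypicComponent_eq_iSup_range]
  apply le_antisymm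
  · refine hρ.coeffSpace_le_iff.2 fun e he ↦ ?_
    exact le_iSup (fun f : hρ.DualModule →ₗ[WithConv (C →ₗ[k] k)] isComod_comul.DualModule ↦
      LinearMap.range f) (hρ.dualModuleHom isComod_comul he)
  · rw [Submodule.restrictScalars_iSup]
    exact iSup_le fun f ↦
      (hρ.isComodHom_restrictScalars isComod_comul f).range_le_coeffSpace hρ

lemma SimpleComodule.coeffSpace_mem_image_isotypicComponents (X : SimpleComodule k C) :
    coeffSpace k C X.ρ ∈ Submodule.restrictScalarsLatticeHom k (WithConv (C →ₗ[k] k))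
      (isComod_comul (k := k) (C := C)).DualModule '' isotypicComponents _ _ := by
  have := X.isComod.isSimpleModule_dualModule X.isSimple
  obtain ⟨v, hv⟩ := X.isSimple.exists_ne_zero
  obtain ⟨e, he, hev⟩ := X.isComod.exists_isComodHom_apply_ne_zero hv
  have hom_ne_zero : X.isComod.dualModuleHom isComod_comul he ≠ 0 :=
    fun h ↦ hev (LinearMap.congr_fun h v)
  exact ⟨_, isotypicComponent_mem_isotypicComponents hom_ne_zero,
    (X.isComod.coeffSpace_eq_restrictScalars_isotypicComponent X.isSimple).symm⟩

lemma sSupIndep_coeffSpace :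
    sSupIndep (Set.range fun X : SimpleComodule k C ↦ coeffSpace k C X.ρ) :=
  (sSupIndep_image _ (sSupIndep_isotypicComponents _ _)).mono <|
    Set.range_subset_iff.2 SimpleComodule.coeffSpace_mem_image_isotypicComponents

variable {B : Type u} [AddCommGroup B] [Module k B] {π : C →ₗ[k] B} {b : B}

lemma IsComod.coeffSpace_le_coinvariants (hρ : IsComod k C ρ) (hs : IsSimpleComod k C ρ)
    (hA : IsSubcomod k C Coalgebra.comul (coinvariants π b (Coalgebra.comul (R := k) (A := C))))
    {v : V} (hv : v ≠ 0) (hinv : v ∈ coinvariants π b ρ) :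
    coeffSpace k C ρ ≤ coinvariants π b (Coalgebra.comul (R := k) (A := C)) :=
  hρ.coeffSpace_le_iff.2 fun _ he ↦
    hs.range_le_of_apply_mem he hA hv (he.map_mem_coinvariants hinv)

lemma IsCosemisimple.le_sSup_coeffSpace (hC : IsCosemisimple k C) {A : Submodule k C}
    (hA : IsSubcomod k C Coalgebra.comul A) :
    A ≤ sSup {D | ∃ X : SimpleComodule k C, (∃ e : X.V →ₗ[k] C,
      IsComodHom k C X.ρ Coalgebra.comul e ∧ Function.Injective e ∧ LinearMap.range e ≤ A) ∧
      D = coeffSpace k C X.ρ} := by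
  rw [← Submodule.comap_subtype_eq_top]
  refine hC.eq_top_of_forall_range_le (hA.isComod_coaction isComod_comul) fun X f hf inj ↦ ?_
  have he : IsComodHom k C X.ρ Coalgebra.comul (A.subtype ∘ₗ f) := hA.isComodHom_subtype.comp hf
  have range_le : LinearMap.range (A.subtype ∘ₗ f) ≤ A := by
    rw [LinearMap.range_comp]
    exact Submodule.map_subtype_le A _
  rw [← Submodule.map_le_iff_le_comap, ← LinearMap.range_comp]
  exact (he.range_le_coeffSpace X.isComod).trans <|
    le_sSup ⟨X, ⟨_, he, A.subtype_injective.comp inj, range_le⟩, rfl⟩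

end CoeffSpace

end QG

open QG in
theorem statement_4_general {k C B : Type u} [Field k] [AddCommGroup C] [Module k C]
    [Coalgebra k C] [AddCommGroup B] [Module k B] (hC : IsCosemisimple k C) (π : C →ₗ[k] B) (b : B)
    (hA : IsSubcomod k C Coalgebra.comul (coinvariants π b (Coalgebra.comul (R := k) (A := C)))) :
    coinvariants π b Coalgebra.comul =
      sSup {D : Submodule k C | ∃ U : SimpleComodule k C,
        (∃ v : U.V, v ≠ 0 ∧ v ∈ coinvariants π b U.ρ) ∧ D = coeffSpace k C U.ρ} ∧
    sSupIndep {D : Submodule k C | ∃ U : SimpleComodule k C,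
        (∃ v : U.V, v ≠ 0 ∧ v ∈ coinvariants π b U.ρ) ∧ D = coeffSpace k C U.ρ} := by
  refine ⟨le_antisymm ?_ (sSup_le ?_), sSupIndep_coeffSpace.mono ?_⟩
  · refine (hC.le_sSup_coeffSpace hA).trans (sSup_le_sSup ?_)
    rintro _ ⟨X, ⟨e, he, inj, range_le⟩, rfl⟩
    obtain ⟨v, hv⟩ := X.isSimple.exists_ne_zero
    exact ⟨X, ⟨v, hv, he.mem_coinvariants_of_map_mem inj (range_le ⟨v, rfl⟩)⟩, rfl⟩
  · rintro _ ⟨U, ⟨v, hv, hinv⟩, rfl⟩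
    exact U.isComod.coeffSpace_le_coinvariants U.isSimple hA hv hinv
  · rintro _ ⟨U, -, rfl⟩
    exact ⟨U, rfl⟩

open QG HopfAlgebra in
/-- Let `π : O(G) → O(H)` be surjective with `O(G)`
cosemisimple and `A := O(G/H) = O(H\G)` a Hopf subalgebra of `O(G)`.  Then
`A` is exactly the direct sum of the coefficient coalgebras `C_U` over the
simple right `O(G)`-comodules `U` whose restriction to `O(H)` has a nonzero
invariant vector. -/
theorem statement_4 (k : Type u) [Field k] [IsAlgClosed k]
    (G H : Type u) [Ring G] [HopfAlgebra k G] [Ring H] [HopfAlgebra k H]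
    (π : G →ₐc[k] H) (hsurj : Function.Surjective π)
    (hcss : IsCosemisimple k G)
    (hAeq : quotientSpaceLeft k G (π : G →ₗ[k] H) =
      quotientSpaceRight k G (π : G →ₗ[k] H))
    (hHopf : IsHopfSubalgebra k G (quotientSpaceLeft k G (π : G →ₗ[k] H))) :
    quotientSpaceLeft k G (π : G →ₗ[k] H) =
      sSup {D : Submodule k G | ∃ U : SimpleComodule k G,
        (∃ v : U.V, v ≠ 0 ∧ IsInvariant k H (cores k G (π : G →ₗ[k] H) U.ρ) v) ∧
        D = coeffSpace k G U.ρ} ∧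
    sSupIndep {D : Submodule k G | ∃ U : SimpleComodule k G,
        (∃ v : U.V, v ≠ 0 ∧ IsInvariant k H (cores k G (π : G →ₗ[k] H) U.ρ) v) ∧
        D = coeffSpace k G U.ρ} := by
  rw [quotientSpaceLeft_eq_coinvariants] at hHopf ⊢
  exact statement_4_general hcss _ 1 hHopf.2.2.1.isSubcomod
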